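/- Let μ, ν be probability measures on ℝ^d, let T ≥ 1, and for each t ∈ {1,…,T} let σ_t > 0 and w_t > 0. Define DiKL(μ‖ν) = Σ_{t=1}^T w_t · KL(μ ∗ γ_{σ_t} ‖ ν ∗ γ_{σ_t}), where γ_σ = N(0, σ²·I_d). Then DiKL(μ‖ν) = 0 if and only if μ = ν. -/

import Mathlib

open MeasureTheory Real
open scoped ENNReal Classical

/-- The isotropic centered Gaussian measure `N(0, σ²·I_d)` on `ℝ^d`, given by its
density `(2πσ²)^(-d/2) · exp(-‖x‖²/(2σ²))` with respect to Lebesgue measure. -/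
noncomputable def gaussianIso (d : ℕ) (σ : ℝ) : Measure (EuclideanSpace ℝ (Fin d)) :=
  volume.withDensity fun x =>
    ENNReal.ofReal ((2 * π * σ ^ 2) ^ (-(d : ℝ) / 2) * Real.exp (-‖x‖ ^ 2 / (2 * σ ^ 2)))

/-- The Kullback–Leibler divergence `KL(P‖Q) = ∫ log (dP/dQ) dP` when `P ≪ Q`
(and the integral makes sense), and `+∞` otherwise. -/
noncomputable def KL {α : Type*} [MeasurableSpace α] (P Q : Measure α) : ℝ≥0∞ :=
  if P ≪ Q ∧ Integrable (fun x => Real.log (P.rnDeriv Q x).toReal) P then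
    ENNReal.ofReal (∫ x, Real.log (P.rnDeriv Q x).toReal ∂P) else ⊤

/-- The diffusive KL divergence: a positively weighted sum of KL divergences between
Gaussian-smoothed versions of the two measures at noise levels `σ 1, …, σ T`. -/
noncomputable def DiKL {d : ℕ} (T : ℕ) (w σ : Fin T → ℝ)
    (μ ν : Measure (EuclideanSpace ℝ (Fin d))) : ℝ≥0∞ :=
  ∑ t : Fin T, ENNReal.ofReal (w t) * KL (μ.conv (gaussianIso d (σ t))) (ν.conv (gaussianIso d (σ t)))

lemma gaussianIso_integrable (d : ℕ) (σ : ℝ) (hσ : 0 < σ) :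
    Integrable (fun x : EuclideanSpace ℝ (Fin d) =>
      (2 * π * σ ^ 2) ^ (-(d : ℝ) / 2) * Real.exp (-‖x‖ ^ 2 / (2 * σ ^ 2))) := by
  refine Integrable.const_mul ?_ _
  have hb : 0 < (((1 / (2 * σ ^ 2) : ℝ) : ℂ)).re := by
    rw [Complex.ofReal_re]; positivity
  have h := (GaussianFourier.integrable_cexp_neg_mul_sq_norm_add hb 0
    (0 : EuclideanSpace ℝ (Fin d))).re
  refine h.congr (Filter.Eventually.of_forall fun x => ?_)
  have : (-(((1 / (2 * σ ^ 2) : ℝ) : ℂ)) * (‖x‖ : ℂ) ^ 2 + 0 *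
      ((inner ℝ (0 : EuclideanSpace ℝ (Fin d)) x : ℝ) : ℂ))
      = ((-‖x‖ ^ 2 / (2 * σ ^ 2) : ℝ) : ℂ) := by
    push_cast; ring
  beta_reduce
  rw [this, ← Complex.ofReal_exp]
  simp only [RCLike.re_to_complex, Complex.ofReal_re]

lemma gaussianIso_finite (d : ℕ) (σ : ℝ) (hσ : 0 < σ) :
    IsFiniteMeasure (gaussianIso d σ) := by
  unfold gaussianIso
  exact isFiniteMeasure_withDensity_ofReal (gaussianIso_integrable d σ hσ).2

lemma charFun_gaussianIso_ne (d : ℕ) (σ : ℝ) (hσ : 0 < σ) (t : EuclideanSpace ℝ (Fin d)) :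
    charFun (gaussianIso d σ) t ≠ 0 := by
  have hb : 0 < (((1 / (2 * σ ^ 2) : ℝ) : ℂ)).re := by
    rw [Complex.ofReal_re]; positivity
  have hb0 : (((1 / (2 * σ ^ 2) : ℝ) : ℂ)) ≠ 0 := by
    intro h; rw [h] at hb; simp at hb
  have key : charFun (gaussianIso d σ) t =
      (((2 * π * σ ^ 2) ^ (-(d : ℝ) / 2) : ℝ) : ℂ) *
      ∫ v : EuclideanSpace ℝ (Fin d),
        Complex.exp (-(((1 / (2 * σ ^ 2) : ℝ) : ℂ)) * ‖v‖ ^ 2 + Complex.I * (inner ℝ t v : ℝ)) := by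
    rw [charFun_apply, gaussianIso, ← integral_const_mul]
    have := integral_withDensity_eq_integral_smul
      (μ := (volume : Measure (EuclideanSpace ℝ (Fin d))))
      (f := fun x => ((2 * π * σ ^ 2) ^ (-(d : ℝ) / 2) *
        Real.exp (-‖x‖ ^ 2 / (2 * σ ^ 2))).toNNReal) (by fun_prop)
      (fun x => Complex.exp ((inner ℝ x t : ℝ) * Complex.I))
    refine this.trans (integral_congr_ae (Filter.Eventually.of_forall fun x => ?_))
    beta_reduce
    rw [NNReal.smul_def, Real.coe_toNNReal _ (by positivity), Complex.real_smul,
      Complex.exp_add, real_inner_comm]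
    push_cast
    rw [mul_assoc]
    congr 3
    · congr 1; ring
    · ring
  rw [key, GaussianFourier.integral_cexp_neg_mul_sq_norm_add hb]
  refine mul_ne_zero ?_ (mul_ne_zero ?_ (Complex.exp_ne_zero _))
  · rw [Complex.ofReal_ne_zero]; positivity
  · rw [Complex.cpow_def_of_ne_zero (div_ne_zero (by exact_mod_cast Real.pi_ne_zero) hb0)]
    exact Complex.exp_ne_zero _

lemma KL_eq_klDiv {α : Type*} [MeasurableSpace α] (P Q : Measure α)
    (h : P Set.univ = Q Set.univ) : KL P Q = InformationTheory.klDiv P Q := by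
  have h' : P.real Set.univ = Q.real Set.univ := by simp [measureReal_def, h]
  unfold KL
  split_ifs with hc
  · rw [InformationTheory.klDiv_of_ac_of_integrable hc.1 hc.2, h', add_sub_cancel_right]
    rfl
  · exact (InformationTheory.klDiv_eq_top_iff.mpr fun h1 h2 => hc ⟨h1, h2⟩).symm

/-- Validity of the diffusive KL divergence: `DiKL(μ‖ν) = 0` iff `μ = ν`. -/
theorem diKL_eq_zero_iff {d : ℕ} {T : ℕ} (hT : 1 ≤ T) (w σ : Fin T → ℝ)
    (hw : ∀ t, 0 < w t) (hσ : ∀ t, 0 < σ t)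
    (μ ν : Measure (EuclideanSpace ℝ (Fin d)))
    [IsProbabilityMeasure μ] [IsProbabilityMeasure ν] :
    DiKL T w σ μ ν = 0 ↔ μ = ν := by
  have hfin : ∀ t, IsFiniteMeasure (gaussianIso d (σ t)) := fun t =>
    gaussianIso_finite d _ (hσ t)
  have hmass : ∀ t, ∀ ρ : Measure (EuclideanSpace ℝ (Fin d)), IsProbabilityMeasure ρ →
      (ρ.conv (gaussianIso d (σ t))) Set.univ = gaussianIso d (σ t) Set.univ := by
    intro t ρ hρ
    have := hfin t
    rw [Measure.conv, Measure.map_apply (by fun_prop) MeasurableSet.univ, Set.preimage_univ,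
      ← Set.univ_prod_univ, Measure.prod_prod, measure_univ, one_mul]
  have hKL : ∀ t, KL (μ.conv (gaussianIso d (σ t))) (ν.conv (gaussianIso d (σ t))) = 0 ↔
      μ.conv (gaussianIso d (σ t)) = ν.conv (gaussianIso d (σ t)) := by
    intro t
    have := hfin t
    rw [KL_eq_klDiv _ _ (by rw [hmass t μ inferInstance, hmass t ν inferInstance]),
      InformationTheory.klDiv_eq_zero_iff]
  unfold DiKL
  rw [Finset.sum_eq_zero_iff]
  constructor
  · intro h
    let t : Fin T := ⟨0, hT⟩
    have := hfin t
    have h0 := h t (Finset.mem_univ _)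
    rw [mul_eq_zero, ENNReal.ofReal_eq_zero] at h0
    have h1 := (hKL t).1 (h0.resolve_left (not_le.mpr (hw t)))
    apply Measure.ext_of_charFun
    ext x
    have h2 := congrArg (fun m => charFun m x) h1
    simp only [charFun_conv] at h2
    exact mul_right_cancel₀ (charFun_gaussianIso_ne d _ (hσ t) x) h2
  · intro h t _
    rw [(hKL t).2 (by rw [h]), mul_zero]
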